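/- There exists a function f on ℝ², 1-periodic in both variables, such that for every 1 ≤ p < ∞, f belongs to the mixed norm class V_p[V_p] but f does not belong to H_p^{(2)}. Consequently, V_p[V_p] ⊄ H_p^{(2)} for every 1 ≤ p < ∞. -/

import Mathlib

open MeasureTheory Filter Set
open scoped ENNReal

noncomputable section

/-- A function of two real variables that is 1-periodic in each variable. -/
def BiPeriodic (f : ℝ → ℝ → ℝ) : Prop :=
  (∀ x y, f (x + 1) y = f x y) ∧ (∀ x y, f x (y + 1) = f x y)

/-- A 1-periodic function of one real variable. -/
def Periodic1 (g : ℝ → ℝ) : Prop := ∀ x, g (x + 1) = g x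

/-- The `L^p` norm of a function over `[0,1]^2` (as a value in `[0,∞]`). -/
noncomputable def lpNorm2 (p : ℝ) (f : ℝ → ℝ → ℝ) : ℝ≥0∞ :=
  (∫⁻ x in Set.Icc (0:ℝ) 1, ∫⁻ y in Set.Icc (0:ℝ) 1,
      ENNReal.ofReal (|f x y| ^ p)) ^ (1 / p)

/-- The `L^p` norm of a function over `[0,1]` (as a value in `[0,∞]`). -/
noncomputable def lpNorm1 (p : ℝ) (g : ℝ → ℝ) : ℝ≥0∞ :=
  (∫⁻ x in Set.Icc (0:ℝ) 1, ENNReal.ofReal (|g x| ^ p)) ^ (1 / p)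

/-- Membership in `L^p([0,1]^2)`: measurable, 1-periodic in each variable,
finite `L^p` norm. -/
def MemLp2 (p : ℝ) (f : ℝ → ℝ → ℝ) : Prop :=
  Measurable (Function.uncurry f) ∧ BiPeriodic f ∧ lpNorm2 p f < ⊤

/-- Membership in `L^p([0,1])` for 1-periodic functions of one variable. -/
def MemLp1 (p : ℝ) (g : ℝ → ℝ) : Prop :=
  Measurable g ∧ Periodic1 g ∧ lpNorm1 p g < ⊤

/-- The (total) `L^p` modulus of continuity `ω(f;δ)_p` of a bivariate function. -/
noncomputable def modulus2 (p : ℝ) (f : ℝ → ℝ → ℝ) (δ : ℝ) : ℝ≥0∞ :=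
  ⨆ (h : ℝ × ℝ) (_ : Real.sqrt (h.1 ^ 2 + h.2 ^ 2) ≤ δ),
    lpNorm2 p (fun x y => f (x + h.1) (y + h.2) - f x y)

/-- The `L^p` modulus of continuity `ω(g;δ)_p` of a univariate function. -/
noncomputable def modulus1 (p : ℝ) (g : ℝ → ℝ) (δ : ℝ) : ℝ≥0∞ :=
  ⨆ (h : ℝ) (_ : h ∈ Set.Icc 0 δ), lpNorm1 p (fun x => g (x + h) - g x)

/-- The mixed `L^p` modulus of continuity `ω(f;u,v)_p`. -/
noncomputable def mixedModulus (p : ℝ) (f : ℝ → ℝ → ℝ) (u v : ℝ) : ℝ≥0∞ :=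
  ⨆ (s : ℝ) (_ : s ∈ Set.Icc 0 u) (t : ℝ) (_ : t ∈ Set.Icc 0 v),
    lpNorm2 p (fun x y => f (x + s) (y + t) - f (x + s) y - f x (y + t) + f x y)

/-- `J_p(f) = ∫₀¹ t^{-1/p} ω(f;t)_p dt/t`. -/
noncomputable def Jp (p : ℝ) (f : ℝ → ℝ → ℝ) : ℝ≥0∞ :=
  ∫⁻ t in Set.Ioc (0:ℝ) 1, ENNReal.ofReal (t ^ (-(1/p)) / t) * modulus2 p f t

/-- `K_p(f) = ∫₀¹ t^{-1/p} [ω(f;t,1)_p + ω(f;1,t)_p] dt/t`. -/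
noncomputable def Kp (p : ℝ) (f : ℝ → ℝ → ℝ) : ℝ≥0∞ :=
  ∫⁻ t in Set.Ioc (0:ℝ) 1,
    ENNReal.ofReal (t ^ (-(1/p)) / t) * (mixedModulus p f t 1 + mixedModulus p f 1 t)

/-- `I_p(f) = ∫₀¹∫₀¹ (uv)^{-1/p} ω(f;u,v)_p (du/u)(dv/v)`. -/
noncomputable def Ip (p : ℝ) (f : ℝ → ℝ → ℝ) : ℝ≥0∞ :=
  ∫⁻ u in Set.Ioc (0:ℝ) 1, ∫⁻ v in Set.Ioc (0:ℝ) 1,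
    ENNReal.ofReal ((u * v) ^ (-(1/p)) / (u * v)) * mixedModulus p f u v

/-- The essential supremum norm of `f` over `[0,1]^2`. -/
noncomputable def supNorm2 (f : ℝ → ℝ → ℝ) : ℝ≥0∞ :=
  essSup (fun z : ℝ × ℝ => ENNReal.ofReal |f z.1 z.2|)
    (volume.restrict ((Set.Icc (0:ℝ) 1) ×ˢ (Set.Icc (0:ℝ) 1)))

/-- The Wiener `p`-variation of a 1-periodic function `g`, as a value in `[0,∞]`:
the supremum over partitions `x₀ < x₁ < ... < xₙ = x₀ + 1` of
`(∑ |g(x_{k+1}) - g(x_k)|^p)^{1/p}`. -/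
noncomputable def vp (p : ℝ) (g : ℝ → ℝ) : ℝ≥0∞ :=
  ⨆ (n : ℕ) (x : ℕ → ℝ) (_ : ∀ i < n, x i < x (i + 1)) (_ : x n = x 0 + 1),
    ENNReal.ofReal ((∑ k ∈ Finset.range n, |g (x (k + 1)) - g (x k)| ^ p) ^ (1 / p))

/-- The Hardy–Vitali type total `p`-variation of a bivariate function,
as a value in `[0,∞]`: the supremum over nets of
`(∑∑ |Δf(x_i,y_j)|^p)^{1/p}`. -/
noncomputable def vp2 (p : ℝ) (f : ℝ → ℝ → ℝ) : ℝ≥0∞ :=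
  ⨆ (m : ℕ) (n : ℕ) (x : ℕ → ℝ) (y : ℕ → ℝ)
    (_ : ∀ i < m, x i < x (i + 1)) (_ : x m = x 0 + 1)
    (_ : ∀ j < n, y j < y (j + 1)) (_ : y n = y 0 + 1),
    ENNReal.ofReal ((∑ i ∈ Finset.range m, ∑ j ∈ Finset.range n,
      |f (x (i + 1)) (y (j + 1)) - f (x (i + 1)) (y j)
        - f (x i) (y (j + 1)) + f (x i) (y j)| ^ p) ^ (1 / p))

/-- Membership in the Hardy class `H_p^{(2)}`: finite Vitali `p`-variation and
all linear sections of bounded `p`-variation. -/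
def MemHp2 (p : ℝ) (f : ℝ → ℝ → ℝ) : Prop :=
  vp2 p f < ⊤ ∧ (∀ x, vp p (fun y => f x y) < ⊤) ∧ (∀ y, vp p (fun x => f x y) < ⊤)

/-- Membership in the mixed norm class `V_p[V_p]`: all sections have bounded
`p`-variation and the functions `x ↦ v_p(f_x)`, `y ↦ v_p(f_y)` are themselves
of bounded `p`-variation. -/
def MemVpVp (p : ℝ) (f : ℝ → ℝ → ℝ) : Prop :=
  (∀ x, vp p (fun y => f x y) < ⊤) ∧ (∀ y, vp p (fun x => f x y) < ⊤) ∧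
  vp p (fun x => (vp p (fun y => f x y)).toReal) < ⊤ ∧
  vp p (fun y => (vp p (fun x => f x y)).toReal) < ⊤

/-- `W_p(f) = v_p(φ_p[f]) + v_p(ψ_p[f])`, where `φ_p[f](x) = v_p(f_x)` and
`ψ_p[f](y) = v_p(f_y)`. -/
noncomputable def Wp (p : ℝ) (f : ℝ → ℝ → ℝ) : ℝ≥0∞ :=
  vp p (fun x => (vp p (fun y => f x y)).toReal)
    + vp p (fun y => (vp p (fun x => f x y)).toReal)

/-- Membership in `L^p_0([0,1]^2)`: membership in `L^p([0,1]^2)` together with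
vanishing of the linear mean values `∫₀¹ f(x,t) dt` and `∫₀¹ f(t,y) dt` for a.e.
`x` resp. `y`. -/
def MemLp20 (p : ℝ) (f : ℝ → ℝ → ℝ) : Prop :=
  MemLp2 p f ∧ (∀ᵐ x : ℝ ∂volume, ∫ t in (0:ℝ)..1, f x t = 0) ∧
    (∀ᵐ y : ℝ ∂volume, ∫ t in (0:ℝ)..1, f t y = 0)

/-- `T` is a trigonometric polynomial of degree `(n,m)` in two variables. -/
def IsTrigPoly2 (n m : ℕ) (T : ℝ → ℝ → ℝ) : Prop :=
  ∃ a b c d : ℕ → ℕ → ℝ, ∀ x y : ℝ,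
    T x y = ∑ j ∈ Finset.range (n + 1), ∑ k ∈ Finset.range (m + 1),
      (a j k * Real.cos (2 * Real.pi * j * x) * Real.cos (2 * Real.pi * k * y)
        + b j k * Real.cos (2 * Real.pi * j * x) * Real.sin (2 * Real.pi * k * y)
        + c j k * Real.sin (2 * Real.pi * j * x) * Real.cos (2 * Real.pi * k * y)
        + d j k * Real.sin (2 * Real.pi * j * x) * Real.sin (2 * Real.pi * k * y))

end

theorem vp_shift_le (p : ℝ) (g : ℝ → ℝ) (c : ℝ) : vp p (fun y => g (y + c)) ≤ vp p g := by
  unfold vp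
  refine iSup_le fun n => iSup_le fun x => iSup_le fun h1 => iSup_le fun h2 => ?_
  refine le_iSup_of_le n (le_iSup_of_le (fun i => x i + c) (le_iSup_of_le ?_ (le_iSup_of_le ?_ le_rfl)))
  · intro i hi
    have := h1 i hi
    simpa using this
  · simp only [h2]; ring

open Classical in
/-- indicator of the integers -/
noncomputable def indZ (t : ℝ) : ℝ := if (∃ k : ℤ, (k : ℝ) = t) then 1 else 0

theorem indZ_le_ceil {a b : ℝ} (h : a < b) : indZ a ≤ (⌈b⌉ : ℝ) - ⌈a⌉ := by
  unfold indZ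
  split_ifs with hk
  · obtain ⟨k, rfl⟩ := hk
    rw [Int.ceil_intCast]
    have : k < ⌈b⌉ := Int.lt_ceil.2 h
    have h2 : k + 1 ≤ ⌈b⌉ := this
    have h3 : ((k + 1 : ℤ) : ℝ) ≤ (⌈b⌉ : ℝ) := by exact_mod_cast h2
    push_cast at h3; linarith
  · have : ⌈a⌉ ≤ ⌈b⌉ := Int.ceil_mono h.le
    have h3 : (⌈a⌉ : ℝ) ≤ (⌈b⌉ : ℝ) := by exact_mod_cast this
    linarith

theorem indZ_neg (a : ℝ) : indZ (-a) = indZ a := by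
  unfold indZ
  have : (∃ k : ℤ, (k : ℝ) = -a) ↔ (∃ k : ℤ, (k : ℝ) = a) := by
    constructor
    · rintro ⟨k, hk⟩; exact ⟨-k, by push_cast; linarith⟩
    · rintro ⟨k, hk⟩; exact ⟨-k, by push_cast; linarith⟩
  classical exact if_congr this rfl rfl

theorem indZ_add_one (a : ℝ) : indZ (a + 1) = indZ a := by
  unfold indZ
  have : (∃ k : ℤ, (k : ℝ) = a + 1) ↔ (∃ k : ℤ, (k : ℝ) = a) := by
    constructor
    · rintro ⟨k, hk⟩; exact ⟨k - 1, by push_cast; linarith⟩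
    · rintro ⟨k, hk⟩; exact ⟨k + 1, by push_cast; linarith⟩
  classical exact if_congr this rfl rfl

theorem indZ_le_floor {a b : ℝ} (h : a < b) : indZ b ≤ (⌊b⌋ : ℝ) - ⌊a⌋ := by
  have := indZ_le_ceil (neg_lt_neg h)
  rw [indZ_neg, Int.ceil_neg, Int.ceil_neg] at this
  push_cast at this; linarith

theorem indZ_pow {p : ℝ} (hp : 1 ≤ p) (a b : ℝ) : |indZ a - indZ b| ^ p ≤ indZ a + indZ b := by
  have hp0 : p ≠ 0 := by linarith
  unfold indZ
  split_ifs <;> simp [Real.zero_rpow hp0]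

theorem vp_indZ {p : ℝ} (hp : 1 ≤ p) : vp p indZ < ⊤ := by
  refine lt_of_le_of_lt (b := ENNReal.ofReal (2 ^ (1 / p))) ?_ ENNReal.ofReal_lt_top
  unfold vp
  refine iSup_le fun n => iSup_le fun x => iSup_le fun h1 => iSup_le fun h2 => ?_
  refine ENNReal.ofReal_le_ofReal (Real.rpow_le_rpow
    (Finset.sum_nonneg fun i _ => by positivity) ?_ (by positivity))
  calc ∑ k ∈ Finset.range n, |indZ (x (k + 1)) - indZ (x k)| ^ p
      ≤ ∑ k ∈ Finset.range n, (((⌊x (k+1)⌋ : ℝ) + ⌈x (k+1)⌉) - ((⌊x k⌋ : ℝ) + ⌈x k⌉)) := by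
        refine Finset.sum_le_sum fun k hk => ?_
        have h := h1 k (Finset.mem_range.1 hk)
        have e1 := indZ_pow hp (x (k+1)) (x k)
        have e2 := indZ_le_ceil h
        have e3 := indZ_le_floor h
        linarith
    _ = ((⌊x n⌋ : ℝ) + ⌈x n⌉) - ((⌊x 0⌋ : ℝ) + ⌈x 0⌉) :=
        Finset.sum_range_sub (fun k => (⌊x k⌋ : ℝ) + ⌈x k⌉) n
    _ ≤ 2 := by
        rw [h2, Int.floor_add_one, Int.ceil_add_one]; push_cast; linarith

theorem vp_const {p : ℝ} (hp : 1 ≤ p) (c : ℝ) : vp p (fun _ => c) < ⊤ := by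
  have hp0 : p ≠ 0 := by linarith
  unfold vp
  simp [Real.zero_rpow hp0, Real.zero_rpow (inv_ne_zero hp0)]

theorem vp_sec1 (p x : ℝ) : vp p (fun y => indZ (x - y)) = vp p indZ := by
  have h : (fun y => indZ (x - y)) = fun y => indZ (y + (-x)) := by
    funext y; rw [← indZ_neg]; congr 1; ring
  rw [h]
  refine le_antisymm (vp_shift_le p indZ (-x)) ?_
  have := vp_shift_le p (fun y => indZ (y + (-x))) x
  simpa using this

theorem vp_sec2 (p y : ℝ) : vp p (fun x => indZ (x - y)) = vp p indZ := by
  rw [← vp_sec1 p y]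
  congr 1; funext x; rw [← indZ_neg]; congr 1; ring

theorem le_vp2 {p : ℝ} (hp : 1 ≤ p) (n : ℕ) (hn : 2 ≤ n) :
    ENNReal.ofReal ((n : ℝ) ^ (1 / p)) ≤ vp2 p (fun x y => indZ (x - y)) := by
  have hn0 : (0 : ℝ) < n := by positivity
  have hn2 : (2 : ℝ) ≤ n := by exact_mod_cast hn
  have hs : ∀ i < n, (fun i : ℕ => (i : ℝ) / n) i < (fun i : ℕ => (i : ℝ) / n) (i + 1) := by
    intro i _
    simp only
    gcongr; simp
  have he : (fun i : ℕ => (i : ℝ) / n) n = (fun i : ℕ => (i : ℝ) / n) 0 + 1 := by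
    simp [hn0.ne']
  unfold vp2
  refine le_iSup_of_le n (le_iSup_of_le n (le_iSup_of_le (fun i : ℕ => (i : ℝ) / n)
    (le_iSup_of_le (fun i : ℕ => (i : ℝ) / n) (le_iSup_of_le hs (le_iSup_of_le he
    (le_iSup_of_le hs (le_iSup_of_le he ?_)))))))
  refine ENNReal.ofReal_le_ofReal (Real.rpow_le_rpow hn0.le ?_ (by positivity))
  have z0 : indZ 0 = 1 := if_pos ⟨0, by simp⟩
  have z1 : indZ (1 / n) = 0 := by
    refine if_neg ?_
    rintro ⟨k, hk⟩
    have h1 : (0 : ℝ) < k := by rw [hk]; positivity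
    have h2 : (k : ℝ) < 1 := by rw [hk, div_lt_one hn0]; linarith
    have h3 : 0 < k := by exact_mod_cast h1
    have h4 : k < 1 := by exact_mod_cast h2
    omega
  calc (n : ℝ) = ∑ i ∈ Finset.range n, (1 : ℝ) := by simp
    _ ≤ _ := by
      refine Finset.sum_le_sum fun i hi => ?_
      refine le_trans ?_ (Finset.single_le_sum (f := fun j : ℕ =>
        |indZ (((i + 1 : ℕ) : ℝ) / n - ((j + 1 : ℕ) : ℝ) / n) - indZ (((i + 1 : ℕ) : ℝ) / n - (j : ℝ) / n)
          - indZ ((i : ℝ) / n - ((j + 1 : ℕ) : ℝ) / n) + indZ ((i : ℝ) / n - (j : ℝ) / n)| ^ p)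
          (fun j _ => by positivity) hi)
      have a1 : ((i + 1 : ℕ) : ℝ) / n - (i : ℝ) / n = 1 / n := by push_cast; ring
      have a2 : (i : ℝ) / n - ((i + 1 : ℕ) : ℝ) / n = -(1 / n) := by push_cast; ring
      simp only [a1, a2, sub_self, indZ_neg, z0, z1]
      refine Real.one_le_rpow ?_ (by linarith)
      norm_num

/-- There is a biperiodic `f` with `f ∈ V_p[V_p]` but `f ∉ H_p⁽²⁾`
for every `1 ≤ p < ∞`; hence `V_p[V_p] ⊄ H_p⁽²⁾`. -/
theorem statement16 :
    ∃ f : ℝ → ℝ → ℝ, BiPeriodic f ∧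
      ∀ p : ℝ, 1 ≤ p → MemVpVp p f ∧ ¬ MemHp2 p f := by
  refine ⟨fun x y => indZ (x - y), ⟨fun x y => ?_, fun x y => ?_⟩, fun p hp => ⟨?_, ?_⟩⟩
  · show indZ (x + 1 - y) = indZ (x - y)
    rw [← indZ_add_one (x - y)]; congr 1; ring
  · show indZ (x - (y + 1)) = indZ (x - y)
    rw [← indZ_add_one (x - (y + 1))]; congr 1; ring
  · simp only [MemVpVp, vp_sec1, vp_sec2]
    exact ⟨fun _ => vp_indZ hp, fun _ => vp_indZ hp, vp_const hp _, vp_const hp _⟩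
  · rintro ⟨h, -⟩
    set V := vp2 p (fun x y => indZ (x - y)) with hV
    obtain ⟨n, hn⟩ := exists_nat_gt (V.toReal ^ p)
    have h1 := le_vp2 hp (n + 2) (by omega)
    rw [← hV, ENNReal.ofReal_le_iff_le_toReal h.ne] at h1
    have h2 := Real.rpow_le_rpow (by positivity) h1 (by linarith : (0 : ℝ) ≤ p)
    rw [← Real.rpow_mul (by positivity), one_div_mul_cancel (by linarith), Real.rpow_one] at h2
    push_cast at h2
    linarith
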